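/- For every φ ∈ L²(ℝ), one has F(φ) ≤ ½ (3/4)^{2/3} ‖φ‖_{L²(ℝ)}^{4/3}. Moreover, equality holds if and only if there exist α ≥ 0 and v ∈ ℝ such that φ(x) = α² sech²(α(x − v)) for almost every x. -/

import Mathlib

/-!
The proof rests on a completion of squares. For a trial function `g` with `‖g‖₂ = 1` let
`T x = ∫_{-∞}^x g²`, which increases from `0` to `1`, and let `s ≥ 0` be given by `s³ = 6 ‖φ‖₂²`, so
that the claimed bound equals `s² / 8`. If `s > 0`, then (`Admissible.energy_identity`)

  `s² / 8 - ∫ (φ g² - ½ g'²) = ½ ∫ (g' + s g (T - ½))² + (s / 2) ∫ (g² - φ / s)²`.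

It follows from `∫ g² (T - ½)² = 1 / 12` and `∫ (g² (T - ½))' = 0`, and gives the inequality at once.

If equality holds, take trial functions `g n` whose energies tend to `s² / 8`. Then both squares tend
to zero. The first forces `T' = s T (1 - T) + o(1)` uniformly on the line
(`Admissible.logistic_defect`), since the derivative of `g² - s T (1 - T)` is
`2 g (g' + s g (T - ½))`; the second says `g² → φ / s` in `L²`. As `0 ≤ T ≤ 1`, a subsequence of the
`T` converges pointwise to a solution `S` of the logistic equation with `φ = s S'` almost everywhere
(`limit_logistic`), and logistic functions have derivatives of the form `sech²` or zero
(`logistic_sech`).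

Conversely, for `φ = α² sech² (α (x - v))` with `α > 0` the normalized square root of `φ` attains the
bound (`soliton_energy`); for `φ = 0` the supremum `0` is approached by slowly varying solitons.
-/

open MeasureTheory Real Filter

/-- The ground-state energy functional
`F(φ) = sup { ∫ φ g² − ½ (g')² : ‖g‖_{L²} = 1, g, g' ∈ L² }`. -/
noncomputable def Ffun (φ : ℝ → ℝ) : ℝ :=
  sSup { c : ℝ | ∃ g g' : ℝ → ℝ,
    (∀ x, HasDerivAt g (g' x) x) ∧
    MeasureTheory.Integrable (fun x => g x ^ 2) ∧
    MeasureTheory.Integrable (fun x => g' x ^ 2) ∧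
    (∫ x : ℝ, g x ^ 2) = 1 ∧
    c = ∫ x : ℝ, (φ x * g x ^ 2 - (1 / 2) * g' x ^ 2) }

/-- `φ ∈ L²(ℝ)`. -/
def InL2R (φ : ℝ → ℝ) : Prop := MeasureTheory.Integrable (fun x => φ x ^ 2)

/-- `sech x = 2 / (eˣ + e⁻ˣ)`. -/
noncomputable def sech (x : ℝ) : ℝ := 2 / (Real.exp x + Real.exp (-x))

open Topology

/-! ### The cumulative mass of a trial function -/

lemma exists_cumulative {h : ℝ → ℝ} (hc : Continuous h) (h0 : ∀ x, 0 ≤ h x)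
    (hi : Integrable h) (h1 : ∫ x, h x = 1) :
    ∃ T : ℝ → ℝ, (∀ x, HasDerivAt T (h x) x) ∧ (∀ x, 0 ≤ T x) ∧ (∀ x, T x ≤ 1) ∧
      Tendsto T atBot (𝓝 0) ∧ Tendsto T atTop (𝓝 1) := by
  refine ⟨fun x => ∫ t in Set.Iic x, h t, fun x => ?_, fun x => ?_, fun x => ?_, ?_, ?_⟩
  · have h2 : (fun x => ∫ t in Set.Iic x, h t) =
        fun x => (∫ t in (0 : ℝ)..x, h t) + ∫ t in Set.Iic 0, h t := by
      ext x
      rw [← intervalIntegral.integral_Iic_sub_Iic hi.integrableOn hi.integrableOn]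
      ring
    rw [h2]
    exact (intervalIntegral.integral_hasDerivAt_right (hc.intervalIntegrable _ _)
      hc.aestronglyMeasurable.stronglyMeasurableAtFilter hc.continuousAt).add_const _
  · exact setIntegral_nonneg measurableSet_Iic fun t _ => h0 t
  · rw [← h1]
    exact setIntegral_le_integral hi (Eventually.of_forall h0)
  · exact tendsto_integral_Iic_zero tendsto_id
  · rw [← h1]
    exact (aecover_Iic tendsto_id).integral_tendsto_of_countably_generated hi

/-- The trial functions in the supremum defining `Ffun`: `g` is differentiable everywhere with
derivative `g'`, both are square integrable, and `g` has unit `L²` norm. -/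
structure Admissible (g g' : ℝ → ℝ) : Prop where
  hasDeriv : ∀ x, HasDerivAt g (g' x) x
  sq : Integrable (fun x => g x ^ 2)
  sq' : Integrable (fun x => g' x ^ 2)
  mass : (∫ x, g x ^ 2) = 1

namespace Admissible
variable {g g' : ℝ → ℝ}

lemma cont (H : Admissible g g') : Continuous g :=
  continuous_iff_continuousAt.2 fun x => (H.hasDeriv x).continuousAt

lemma meas' (H : Admissible g g') : Measurable g' := by
  have : g' = deriv g := funext fun x => (H.hasDeriv x).deriv.symm
  rw [this]
  exact measurable_deriv g

lemma integrable_mul (H : Admissible g g') : Integrable (fun x => 2 * g x * g' x) := by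
  refine (H.sq.add H.sq').mono'
    ((H.cont.measurable.const_mul 2).mul H.meas').aestronglyMeasurable
    (Eventually.of_forall fun x => ?_)
  simp only [Pi.add_apply, Real.norm_eq_abs]
  exact abs_le.2 ⟨by nlinarith [sq_nonneg (g x + g' x)], by nlinarith [sq_nonneg (g x - g' x)]⟩

lemma hasDeriv_sq (H : Admissible g g') (x : ℝ) :
    HasDerivAt (fun x => g x ^ 2) (2 * g x * g' x) x := by
  simpa using (H.hasDeriv x).fun_pow 2

lemma sq_atTop (H : Admissible g g') : Tendsto (fun x => g x ^ 2) atTop (𝓝 0) :=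
  tendsto_zero_of_hasDerivAt_of_integrableOn_Ioi (a := 0) (fun x _ => H.hasDeriv_sq x)
    H.integrable_mul.integrableOn H.sq.integrableOn

lemma sq_atBot (H : Admissible g g') : Tendsto (fun x => g x ^ 2) atBot (𝓝 0) :=
  tendsto_zero_of_hasDerivAt_of_integrableOn_Iic (a := 0) (fun x _ => H.hasDeriv_sq x)
    H.integrable_mul.integrableOn H.sq.integrableOn

lemma sq_bound (H : Admissible g g') : ∃ C, ∀ x, g x ^ 2 ≤ C := by
  refine ⟨∫ x, ‖2 * g x * g' x‖, fun x => ?_⟩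
  have h := integral_Iic_of_hasDerivAt_of_tendsto' (a := x) (fun x _ => H.hasDeriv_sq x)
    H.integrable_mul.integrableOn H.sq_atBot
  rw [sub_zero] at h
  rw [← h]
  exact (le_abs_self _).trans ((norm_integral_le_integral_norm _).trans
    (setIntegral_le_integral H.integrable_mul.norm (Eventually.of_forall fun _ => norm_nonneg _)))

lemma integrable_four (H : Admissible g g') : Integrable (fun x => g x ^ 4) := by
  obtain ⟨C, hC⟩ := H.sq_bound
  refine (H.sq.const_mul C).mono' (H.cont.pow 4).aestronglyMeasurable
    (Eventually.of_forall fun x => ?_)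
  rw [Real.norm_eq_abs, abs_of_nonneg (by positivity)]
  nlinarith [hC x, sq_nonneg (g x)]

variable {T : ℝ → ℝ} {s : ℝ}

lemma integrable_excess (H : Admissible g g') (hT : ∀ x, HasDerivAt T (g x ^ 2) x)
    (hT0 : ∀ x, 0 ≤ T x) (hT1 : ∀ x, T x ≤ 1) :
    Integrable (fun x => (g' x + s * g x * (T x - 1 / 2)) ^ 2) := by
  have hTc : Continuous T := continuous_iff_continuousAt.2 fun x => (hT x).continuousAt
  refine ((H.sq'.const_mul 2).add (H.sq.const_mul (2 * s ^ 2))).mono' ?_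
    (Eventually.of_forall fun x => ?_)
  · exact ((H.meas'.add ((H.cont.const_mul s).mul
      (hTc.sub continuous_const)).measurable).pow_const 2).aestronglyMeasurable
  · rw [Real.norm_eq_abs, abs_of_nonneg (by positivity)]
    simp only [Pi.add_apply]
    have h1 : (T x - 1 / 2) ^ 2 ≤ 1 := by nlinarith [hT0 x, hT1 x]
    nlinarith [sq_nonneg (g' x - s * g x * (T x - 1 / 2)),
      mul_nonneg (sq_nonneg (s * g x)) (sub_nonneg.2 h1)]

/-- Expanding the square, the cross term is an integration by parts of `g² (T - 1/2)` and the last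
term is `s² ∫₀¹ (t - 1/2)² dt = s² / 12`. Nonnegativity of the left side for every `s` is the sharp
Gagliardo–Nirenberg inequality `∫ g⁴ ≤ ‖g'‖₂ / √3`. -/
lemma integral_excess (H : Admissible g g') (hT : ∀ x, HasDerivAt T (g x ^ 2) x)
    (hT0 : ∀ x, 0 ≤ T x) (hT1 : ∀ x, T x ≤ 1)
    (hbot : Tendsto T atBot (𝓝 0)) (htop : Tendsto T atTop (𝓝 1)) :
    ∫ x, (g' x + s * g x * (T x - 1 / 2)) ^ 2 =
      (∫ x, g' x ^ 2) - s * (∫ x, g x ^ 4) + s ^ 2 / 12 := by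
  have hTc : Continuous T := continuous_iff_continuousAt.2 fun x => (hT x).continuousAt
  have hi1 : Integrable (fun x => g x ^ 2 * (T x - 1 / 2) ^ 2) := by
    refine H.sq.mono' ((H.cont.pow 2).mul ((hTc.sub continuous_const).pow 2)).aestronglyMeasurable
      (Eventually.of_forall fun x => ?_)
    rw [Real.norm_eq_abs, abs_of_nonneg (by positivity)]
    have h1 : (T x - 1 / 2) ^ 2 ≤ 1 := by nlinarith [hT0 x, hT1 x]
    nlinarith [sq_nonneg (g x)]
  have hi2 : Integrable (fun x => 2 * g x * g' x * (T x - 1 / 2)) := by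
    refine H.integrable_mul.mono
      (H.integrable_mul.1.mul (hTc.sub continuous_const).aestronglyMeasurable)
      (Eventually.of_forall fun x => ?_)
    rw [norm_mul]
    refine mul_le_of_le_one_right (norm_nonneg _) ?_
    rw [Real.norm_eq_abs]
    exact abs_le.2 ⟨by linarith [hT0 x], by linarith [hT1 x]⟩
  have e1 : ∫ x, g x ^ 2 * (T x - 1 / 2) ^ 2 = 1 / 12 := by
    have hd : ∀ x, HasDerivAt (fun x => (T x - 1 / 2) ^ 3 / 3) (g x ^ 2 * (T x - 1 / 2) ^ 2) x := by
      intro x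
      exact ((((hT x).sub_const (1 / 2)).fun_pow 3).div_const 3).congr_deriv (by
        push_cast; ring)
    rw [integral_of_hasDerivAt_of_tendsto hd hi1
      (((hbot.sub_const _).pow 3).div_const 3) (((htop.sub_const _).pow 3).div_const 3)]
    norm_num
  have e2 : ∫ x, (2 * g x * g' x * (T x - 1 / 2) + g x ^ 4) = 0 := by
    have hd : ∀ x, HasDerivAt (fun x => g x ^ 2 * (T x - 1 / 2))
        (2 * g x * g' x * (T x - 1 / 2) + g x ^ 4) x := by
      intro x
      exact ((H.hasDeriv_sq x).fun_mul ((hT x).sub_const (1 / 2))).congr_deriv (by ring)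
    rw [integral_of_hasDerivAt_of_tendsto hd (hi2.add H.integrable_four)
      (H.sq_atBot.mul (hbot.sub_const _)) (H.sq_atTop.mul (htop.sub_const _))]
    norm_num
  rw [integral_add hi2 H.integrable_four] at e2
  have e3 : (fun x => (g' x + s * g x * (T x - 1 / 2)) ^ 2) = fun x =>
      g' x ^ 2 + s * (2 * g x * g' x * (T x - 1 / 2)) + s ^ 2 * (g x ^ 2 * (T x - 1 / 2) ^ 2) := by
    ext x; ring
  have hi3 : Integrable (fun x => g' x ^ 2 + s * (2 * g x * g' x * (T x - 1 / 2))) :=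
    H.sq'.add (hi2.const_mul s)
  rw [e3, integral_add hi3 (hi1.const_mul _), integral_add H.sq' (hi2.const_mul s), integral_const_mul, integral_const_mul, e1]
  linear_combination s * e2

/-- If the excess is small, then `T' = g²` almost solves the logistic equation, uniformly in `x`:
the derivative of `g² - s T (1 - T)` is `2 g` times the excess `g' + s g (T - 1/2)`, which is small
in `L¹` by Cauchy–Schwarz. -/
lemma logistic_defect (H : Admissible g g') (hT : ∀ x, HasDerivAt T (g x ^ 2) x)
    (hT0 : ∀ x, 0 ≤ T x) (hT1 : ∀ x, T x ≤ 1) (hbot : Tendsto T atBot (𝓝 0))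
    {η : ℝ} (hη : 0 < η)
    (h : ∫ x, (g' x + s * g x * (T x - 1 / 2)) ^ 2 ≤ η ^ 2) (x : ℝ) :
    |g x ^ 2 - s * (T x * (1 - T x))| ≤ 2 * η := by
  have hTc : Continuous T := continuous_iff_continuousAt.2 fun x => (hT x).continuousAt
  have hie := H.integrable_excess (s := s) hT hT0 hT1
  set e : ℝ → ℝ := fun x => g' x + s * g x * (T x - 1 / 2) with he
  have hib : Integrable (fun x => η * g x ^ 2 + η⁻¹ * e x ^ 2) :=
    (H.sq.const_mul η).add (hie.const_mul η⁻¹)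
  -- Young's inequality with weight `η`
  have hbd : ∀ x, ‖2 * g x * e x‖ ≤ η * g x ^ 2 + η⁻¹ * e x ^ 2 := by
    intro x
    have h1 : ∀ r : ℝ, η * (g x + r * (η⁻¹ * e x)) ^ 2 =
        η * g x ^ 2 + 2 * r * g x * e x + r ^ 2 * (η⁻¹ * e x ^ 2) := by
      intro r; field_simp; ring
    have h2 := h1 1
    have h3 := h1 (-1)
    have h4 : 0 ≤ η * (g x + 1 * (η⁻¹ * e x)) ^ 2 := by positivity
    have h5 : 0 ≤ η * (g x + (-1) * (η⁻¹ * e x)) ^ 2 := by positivity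
    rw [Real.norm_eq_abs]
    exact abs_le.2 ⟨by linarith, by linarith⟩
  have hme : Measurable e :=
    H.meas'.add ((H.cont.const_mul s).mul (hTc.sub continuous_const)).measurable
  have hi : Integrable (fun x => 2 * g x * e x) :=
    hib.mono' ((H.cont.measurable.const_mul 2).mul hme).aestronglyMeasurable
      (Eventually.of_forall hbd)
  have hd : ∀ x, HasDerivAt (fun x => g x ^ 2 - s * (T x * (1 - T x))) (2 * g x * e x) x := by
    intro x
    exact ((H.hasDeriv_sq x).fun_sub
      (((hT x).fun_mul ((hT x).const_sub 1)).const_mul s)).congr_deriv (by ring)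
  have hlim : Tendsto (fun x => g x ^ 2 - s * (T x * (1 - T x))) atBot (𝓝 0) := by
    have := H.sq_atBot.sub ((hbot.mul (hbot.const_sub 1)).const_mul s)
    simpa using this
  have key := integral_Iic_of_hasDerivAt_of_tendsto' (a := x) (fun x _ => hd x)
    hi.integrableOn hlim
  rw [sub_zero] at key
  rw [← key]
  calc |∫ x in Set.Iic x, 2 * g x * e x| ≤ ∫ x in Set.Iic x, ‖2 * g x * e x‖ :=
        norm_integral_le_integral_norm (fun x => 2 * g x * e x)
    _ ≤ ∫ x, ‖2 * g x * e x‖ :=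
        setIntegral_le_integral hi.norm (Eventually.of_forall fun _ => norm_nonneg _)
    _ ≤ ∫ x, (η * g x ^ 2 + η⁻¹ * e x ^ 2) := integral_mono hi.norm hib hbd
    _ = η + η⁻¹ * ∫ x, e x ^ 2 := by
        rw [integral_add (H.sq.const_mul η) (hie.const_mul η⁻¹), integral_const_mul,
          integral_const_mul, H.mass, mul_one]
    _ ≤ η + η⁻¹ * η ^ 2 := by gcongr
    _ = 2 * η := by field_simp; ring

/-- The distance of the energy from its upper bound `s² / 8` is a sum of two squares, where `s` is
fixed by `s³ = 6 ‖φ‖₂²`. No measurability of `φ` itself is assumed, only integrability of `φ²` and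
of the energy density. -/
lemma energy_identity (H : Admissible g g') (hT : ∀ x, HasDerivAt T (g x ^ 2) x)
    (hT0 : ∀ x, 0 ≤ T x) (hT1 : ∀ x, T x ≤ 1)
    (hbot : Tendsto T atBot (𝓝 0)) (htop : Tendsto T atTop (𝓝 1)) (hs : 0 < s)
    {φ : ℝ → ℝ} (hφ : Integrable (fun x => φ x ^ 2)) (hs3 : s ^ 3 = 6 * ∫ x, φ x ^ 2)
    (hi : Integrable (fun x => φ x * g x ^ 2 - (1 / 2) * g' x ^ 2)) :
    Integrable (fun x => (g x ^ 2 - φ x / s) ^ 2) ∧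
    s ^ 2 / 8 - ∫ x, (φ x * g x ^ 2 - (1 / 2) * g' x ^ 2) =
      1 / 2 * (∫ x, (g' x + s * g x * (T x - 1 / 2)) ^ 2) +
        s / 2 * ∫ x, (g x ^ 2 - φ x / s) ^ 2 := by
  have hm : Integrable (fun x => φ x * g x ^ 2) := by
    have := hi.add (H.sq'.const_mul (1 / 2))
    refine this.congr (Eventually.of_forall fun x => ?_)
    simp
  have e1 : (fun x => (g x ^ 2 - φ x / s) ^ 2) =
      fun x => g x ^ 4 - 2 / s * (φ x * g x ^ 2) + 1 / s ^ 2 * φ x ^ 2 := by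
    ext x; field_simp; ring
  have hi1 : Integrable (fun x => g x ^ 4 - 2 / s * (φ x * g x ^ 2)) :=
    H.integrable_four.sub (hm.const_mul (2 / s))
  have hi2 := hφ.const_mul (1 / s ^ 2)
  refine ⟨by rw [e1]; exact hi1.add hi2, ?_⟩
  rw [e1, integral_add hi1 hi2, integral_sub H.integrable_four (hm.const_mul (2 / s)),
    integral_sub hm (H.sq'.const_mul _), integral_const_mul, integral_const_mul,
    integral_const_mul, H.integral_excess hT hT0 hT1 hbot htop]
  have h6 : ∫ x, φ x ^ 2 = s ^ 3 / 6 := by linarith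
  rw [h6]
  field_simp
  ring

end Admissible

/-! ### The logistic equation -/

/-- The difference `Q` of the two sides satisfies the linear equation `Q' = -s S Q` and vanishes
at `0`. The identity determines `S` from `S 0` without dividing, so the equilibria `S 0 = 0` and
`S 0 = 1` are included. -/
lemma logistic_unique {S : ℝ → ℝ} {s : ℝ}
    (hS : ∀ x, HasDerivAt S (s * (S x * (1 - S x))) x) (x : ℝ) :
    (1 - S 0) * S x * exp (-(s * x)) = S 0 * (1 - S x) := by
  have hSc : Continuous S := continuous_iff_continuousAt.2 fun x => (hS x).continuousAt
  have hI : ∀ x, HasDerivAt (fun x => ∫ t in (0 : ℝ)..x, S t) (S x) x := fun x =>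
    intervalIntegral.integral_hasDerivAt_right (hSc.intervalIntegrable _ _)
      hSc.aestronglyMeasurable.stronglyMeasurableAtFilter hSc.continuousAt
  have hE : ∀ x, HasDerivAt (fun x : ℝ => exp (-(s * x))) (exp (-(s * x)) * -(s * 1)) x := fun x =>
    (((hasDerivAt_id x).const_mul s).neg).exp
  have hF : ∀ x, HasDerivAt (fun x => ((1 - S 0) * S x * exp (-(s * x)) - S 0 * (1 - S x)) *
      exp (s * ∫ t in (0 : ℝ)..x, S t)) 0 x := by
    intro x
    exact (((((hS x).const_mul (1 - S 0)).fun_mul (hE x)).fun_sub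
      (((hS x).const_sub 1).const_mul (S 0))).fun_mul ((hI x).const_mul s).exp).congr_deriv (by
        ring)
  have h := is_const_of_deriv_eq_zero (fun x => (hF x).differentiableAt)
    (fun x => (hF x).deriv) x 0
  simp only [mul_zero, neg_zero, exp_zero, mul_one, intervalIntegral.integral_same] at h
  have h2 : ((1 - S 0) * S x * exp (-(s * x)) - S 0 * (1 - S x)) *
      exp (s * ∫ t in (0 : ℝ)..x, S t) = 0 := by rw [h]; ring
  rcases mul_eq_zero.1 h2 with h3 | h3
  · linarith
  · exact absurd h3 (exp_pos _).ne'

lemma logistic_sech {S : ℝ → ℝ} {s : ℝ} (hs : 0 < s) (h0 : 0 ≤ S 0) (h1 : S 0 ≤ 1)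
    (hS : ∀ x, HasDerivAt S (s * (S x * (1 - S x))) x) :
    ∃ α : ℝ, 0 ≤ α ∧ ∃ v : ℝ, ∀ x, s ^ 2 * (S x * (1 - S x)) = α ^ 2 * sech (α * (x - v)) ^ 2 := by
  have hu := logistic_unique hS
  rcases h0.eq_or_lt with h | h
  · refine ⟨0, le_rfl, 0, fun x => ?_⟩
    have := hu x
    rw [← h] at this
    have h3 : S x = 0 := by simpa [(exp_pos _).ne'] using this
    simp [h3]
  rcases h1.eq_or_lt with h' | h'
  · refine ⟨0, le_rfl, 0, fun x => ?_⟩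
    have := hu x
    rw [h'] at this
    have h3 : 1 - S x = 0 := by linarith
    simp [h3]
  have hr : 0 < (1 - S 0) / S 0 := div_pos (by linarith) h
  -- the centre `v` solves `exp (s v) = (1 - S 0) / S 0`, that is, `S v = 1 / 2`
  refine ⟨s / 2, by positivity, log ((1 - S 0) / S 0) / s, fun x => ?_⟩
  set v := log ((1 - S 0) / S 0) / s with hv
  set a := exp (s / 2 * (x - v)) with ha
  have hapos : 0 < a := exp_pos _
  have hk : (1 - S 0) / S 0 * exp (-(s * x)) = (a ^ 2)⁻¹ := by
    have : (1 - S 0) / S 0 = exp (s * v) := by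
      rw [hv, mul_div_cancel₀ _ hs.ne', exp_log hr]
    rw [this, ← exp_add, ha, ← exp_nat_mul, ← exp_neg]
    congr 1; push_cast; ring
  have h4 : S x * (a ^ 2)⁻¹ = 1 - S x := by
    rw [← hk]
    have := hu x
    field_simp
    linarith
  have h5 : S x = a ^ 2 / (a ^ 2 + 1) := by
    field_simp at h4 ⊢
    linarith
  have h6 : sech (s / 2 * (x - v)) = 2 / (a + a⁻¹) := by
    rw [sech, ha, ← exp_neg]
  rw [h6, h5]
  field_simp
  ring

/-- Compactness: if densities `h n = (T n)'` of functions `0 ≤ T n ≤ 1` almost solve the logistic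
equation uniformly and converge to `ψ` in `L²`, then `ψ` is almost everywhere the density of an exact
solution. Measurability of `ψ` is not assumed; it follows from the almost everywhere convergence of
a subsequence. -/
lemma limit_logistic {ψ : ℝ → ℝ} {s : ℝ} (hs : 0 < s) {h T : ℕ → ℝ → ℝ}
    (hc : ∀ n, Continuous (h n)) (hT : ∀ n x, HasDerivAt (T n) (h n x) x)
    (hT0 : ∀ n x, 0 ≤ T n x) (hT1 : ∀ n x, T n x ≤ 1)
    (hd : ∀ (n : ℕ) x, |h n x - s * (T n x * (1 - T n x))| ≤ 1 / ((n : ℝ) + 1))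
    (hi : ∀ n, Integrable (fun x => (h n x - ψ x) ^ 2))
    (hl : ∀ n : ℕ, ∫ x, (h n x - ψ x) ^ 2 ≤ 1 / ((n : ℝ) + 1)) :
    ∃ S : ℝ → ℝ, 0 ≤ S 0 ∧ S 0 ≤ 1 ∧ (∀ x, HasDerivAt S (s * (S x * (1 - S x))) x) ∧
      ∀ᵐ x, ψ x = s * (S x * (1 - S x)) := by
  -- `L¹` convergence of `(h n - ψ)²` to `0` gives an almost everywhere convergent subsequence
  have hm : TendstoInMeasure volume (fun n x => (h n x - ψ x) ^ 2) atTop (fun _ => (0 : ℝ)) := by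
    refine tendstoInMeasure_of_tendsto_eLpNorm one_ne_zero (fun n => (hi n).1)
      aestronglyMeasurable_const ?_
    have h1 : ∀ n, eLpNorm ((fun x => (h n x - ψ x) ^ 2) - fun _ => (0 : ℝ)) 1 volume =
        ENNReal.ofReal (∫ x, (h n x - ψ x) ^ 2) := by
      intro n
      rw [eLpNorm_one_eq_lintegral_enorm]
      have h2 : ((fun x => (h n x - ψ x) ^ 2) - fun _ => (0 : ℝ)) =
          fun x => (h n x - ψ x) ^ 2 := by ext x; simp
      rw [h2, ← ofReal_integral_norm_eq_lintegral_enorm (hi n)]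
      simp
    simp_rw [h1]
    rw [← ENNReal.ofReal_zero]
    refine ENNReal.tendsto_ofReal (squeeze_zero (fun n => integral_nonneg fun x => sq_nonneg _) hl
      tendsto_one_div_add_atTop_nhds_zero_nat)
  obtain ⟨ns, hns, hae⟩ := hm.exists_seq_tendsto_ae
  -- along a further subsequence the values at the origin converge
  obtain ⟨τ, hτ, ms, hms, hτl⟩ := (isCompact_Icc (a := (0 : ℝ)) (b := 1)).tendsto_subseq
    (x := fun n => T (ns n) 0) (fun n => ⟨hT0 _ _, hT1 _ _⟩)
  set k : ℕ → ℕ := fun n => ns (ms n) with hk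
  have hkt : Tendsto k atTop atTop := hns.tendsto_atTop.comp hms.tendsto_atTop
  have hae' : ∀ᵐ x, Tendsto (fun n => h (k n) x) atTop (𝓝 (ψ x)) := by
    filter_upwards [hae] with x hx
    have h1 := (hx.comp hms.tendsto_atTop).sqrt
    rw [sqrt_zero] at h1
    have h2 : Tendsto (fun n => |h (k n) x - ψ x|) atTop (𝓝 0) := by
      refine h1.congr fun n => ?_
      simp [sqrt_sq_eq_abs, hk]
    exact tendsto_iff_norm_sub_tendsto_zero.2 h2
  have hb : ∀ n x, |h n x| ≤ s + 1 := by
    intro n x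
    have h1 : |h n x - s * (T n x * (1 - T n x))| ≤ 1 := (hd n x).trans (by
      rw [div_le_one (by positivity)]; linarith [(Nat.cast_nonneg n : (0 : ℝ) ≤ n)])
    have h2 := abs_le.1 h1
    have h3 : 0 ≤ T n x * (1 - T n x) := mul_nonneg (hT0 n x) (by linarith [hT1 n x])
    have h4 : T n x * (1 - T n x) ≤ 1 := by nlinarith [hT0 n x, hT1 n x]
    exact abs_le.2 ⟨by nlinarith, by nlinarith⟩
  have hftc : ∀ n x, T n x = T n 0 + ∫ t in (0 : ℝ)..x, h n t := by
    intro n x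
    rw [intervalIntegral.integral_eq_sub_of_hasDerivAt (fun t _ => hT n t)
      ((hc n).intervalIntegrable _ _)]
    ring
  set S : ℝ → ℝ := fun x => τ + ∫ t in (0 : ℝ)..x, ψ t with hS
  have hTS : ∀ x, Tendsto (fun n => T (k n) x) atTop (𝓝 (S x)) := by
    intro x
    simp_rw [hftc _ x]
    refine Tendsto.add hτl ?_
    refine intervalIntegral.tendsto_integral_filter_of_dominated_convergence (fun _ => s + 1)
      (Eventually.of_forall fun n => (hc _).aestronglyMeasurable)
      (Eventually.of_forall fun n => Eventually.of_forall fun x _ => hb _ x)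
      intervalIntegrable_const ?_
    filter_upwards [hae'] with x hx _ using hx
  have hhS : ∀ x, Tendsto (fun n => h (k n) x) atTop (𝓝 (s * (S x * (1 - S x)))) := by
    intro x
    have h1 : Tendsto (fun n => h (k n) x - s * (T (k n) x * (1 - T (k n) x))) atTop (𝓝 0) := by
      refine squeeze_zero_norm (fun n => hd (k n) x) ?_
      exact tendsto_one_div_add_atTop_nhds_zero_nat.comp hkt
    have h2 := h1.add (((hTS x).mul ((hTS x).const_sub 1)).const_mul s)
    simpa using h2
  have hψ : ∀ᵐ x, ψ x = s * (S x * (1 - S x)) := by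
    filter_upwards [hae'] with x hx using tendsto_nhds_unique hx (hhS x)
  -- `S` is a pointwise limit of functions with a common Lipschitz constant
  have hSc : Continuous S := by
    refine (LipschitzWith.of_dist_le_mul (K := ⟨s + 1, by positivity⟩) fun x y => ?_).continuous
    refine le_of_tendsto ((hTS x).dist (hTS y)) (Eventually.of_forall fun n => ?_)
    rw [dist_eq_norm, dist_eq_norm]
    exact Convex.norm_image_sub_le_of_norm_hasDerivWithin_le
      (fun t _ => (hT (k n) t).hasDerivWithinAt) (fun t _ => hb (k n) t) convex_univ
      (Set.mem_univ y) (Set.mem_univ x)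
  have hfc : Continuous (fun x => s * (S x * (1 - S x))) := by fun_prop
  have hSS : S = fun x => τ + ∫ t in (0 : ℝ)..x, s * (S t * (1 - S t)) := by
    ext x
    have : (∫ t in (0 : ℝ)..x, ψ t) = ∫ t in (0 : ℝ)..x, s * (S t * (1 - S t)) :=
      intervalIntegral.integral_congr_ae (by filter_upwards [hψ] with t ht _ using ht)
    rw [← this]
  have hS0 : S 0 = τ := by simp [hS]
  refine ⟨S, hS0 ▸ hτ.1, hS0 ▸ hτ.2, fun x => ?_, hψ⟩
  have h1 := (intervalIntegral.integral_hasDerivAt_right (a := 0) (b := x)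
    (hfc.intervalIntegrable _ _)
    hfc.aestronglyMeasurable.stronglyMeasurableAtFilter hfc.continuousAt).const_add τ
  rw [← hSS] at h1
  exact h1

/-! ### Hyperbolic functions and the soliton -/

lemma sech_eq (x : ℝ) : sech x = 1 / cosh x := by
  rw [sech, cosh_eq]
  field_simp

lemma sech_sq (x : ℝ) : sech x ^ 2 = 1 - tanh x ^ 2 := by
  rw [sech_eq, tanh_eq_sinh_div_cosh]
  have h := (cosh_pos x).ne'
  field_simp
  linarith [cosh_sq x]

lemma hasDerivAt_tanh' (x : ℝ) : HasDerivAt tanh (sech x ^ 2) x := by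
  have h1 : tanh = fun x => sinh x / cosh x := funext tanh_eq_sinh_div_cosh
  rw [h1]
  have h := (cosh_pos x).ne'
  refine ((hasDerivAt_sinh x).fun_div (hasDerivAt_cosh x) h).congr_deriv ?_
  rw [sech_eq]
  field_simp
  linarith [cosh_sq x]

lemma hasDerivAt_sech (x : ℝ) : HasDerivAt sech (-(sech x * tanh x)) x := by
  have h1 : sech = fun x => (cosh x)⁻¹ := funext fun x => by rw [sech_eq, one_div]
  have h := (cosh_pos x).ne'
  rw [h1]
  refine ((hasDerivAt_cosh x).fun_inv h).congr_deriv ?_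
  rw [tanh_eq_sinh_div_cosh]
  field_simp

lemma tendsto_tanh_atTop : Tendsto tanh atTop (𝓝 1) := by
  have h1 : tanh = fun x => 1 - 2 / (exp (2 * x) + 1) := by
    ext x
    have h2 : exp (2 * x) = exp x ^ 2 := by rw [← exp_nat_mul]; norm_num
    have := exp_pos x
    rw [tanh_eq_sinh_div_cosh, sinh_eq, cosh_eq, exp_neg, h2]
    field_simp
    ring
  rw [h1]
  have h3 : Tendsto (fun x : ℝ => exp (2 * x) + 1) atTop atTop :=
    tendsto_atTop_add_const_right _ _
      (tendsto_exp_atTop.comp (tendsto_id.const_mul_atTop two_pos))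
  simpa using (h3.const_div_atTop 2).const_sub 1

lemma tendsto_tanh_atBot : Tendsto tanh atBot (𝓝 (-1)) := by
  have := (tendsto_tanh_atTop.comp tendsto_neg_atBot_atTop).neg
  refine this.congr fun x => ?_
  simp [tanh_neg]

lemma integral_deriv_nonneg {f f' : ℝ → ℝ} {m n : ℝ} (hd : ∀ x, HasDerivAt f (f' x) x)
    (hc : Continuous f') (h0 : ∀ x, 0 ≤ f' x) (hm : Tendsto f atBot (𝓝 m))
    (hn : Tendsto f atTop (𝓝 n)) : Integrable f' ∧ ∫ x, f' x = n - m := by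
  have hi : Integrable f' := by
    refine integrable_of_intervalIntegral_norm_tendsto (l := atTop) (a := fun x : ℝ => -x)
      (b := fun x => x) (n - m) (fun i => hc.integrableOn_Ioc) tendsto_neg_atTop_atBot tendsto_id ?_
    have h1 : Tendsto (fun i => f i - f (-i)) atTop (𝓝 (n - m)) :=
      hn.sub (hm.comp tendsto_neg_atTop_atBot)
    refine h1.congr fun i => ?_
    rw [← intervalIntegral.integral_eq_sub_of_hasDerivAt (fun t _ => hd t)
      (hc.intervalIntegrable _ _)]
    exact intervalIntegral.integral_congr fun t _ => by
      simp only [Real.norm_eq_abs, abs_of_nonneg (h0 t)]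
  exact ⟨hi, integral_of_hasDerivAt_of_tendsto hd hi hm hn⟩

lemma continuous_sech : Continuous sech :=
  continuous_iff_continuousAt.2 fun x => (hasDerivAt_sech x).continuousAt

lemma continuous_tanh' : Continuous tanh :=
  continuous_iff_continuousAt.2 fun x => (hasDerivAt_tanh' x).continuousAt

section Soliton
variable {β : ℝ} (v : ℝ)

lemma tanh_scaled_atTop (hβ : 0 < β) : Tendsto (fun x => tanh (β * (x - v))) atTop (𝓝 1) :=
  tendsto_tanh_atTop.comp ((tendsto_atTop_add_const_right _ (-v) tendsto_id).const_mul_atTop hβ)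

lemma tanh_scaled_atBot (hβ : 0 < β) : Tendsto (fun x => tanh (β * (x - v))) atBot (𝓝 (-1)) :=
  tendsto_tanh_atBot.comp ((tendsto_atBot_add_const_right _ (-v) tendsto_id).const_mul_atBot hβ)

lemma hasDerivAt_scaled (x : ℝ) : HasDerivAt (fun x => β * (x - v)) β x := by
  simpa using ((hasDerivAt_id x).sub_const v).const_mul β

lemma hasDerivAt_tanh_scaled (x : ℝ) :
    HasDerivAt (fun x => tanh (β * (x - v))) (sech (β * (x - v)) ^ 2 * β) x :=
  (hasDerivAt_tanh' _).comp x (hasDerivAt_scaled v x)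

lemma integral_sech_four (hβ : 0 < β) :
    Integrable (fun x => (β ^ 2 * sech (β * (x - v)) ^ 2) ^ 2) ∧
      ∫ x, (β ^ 2 * sech (β * (x - v)) ^ 2) ^ 2 = 4 / 3 * β ^ 3 := by
  have hc := continuous_sech
  have h := integral_deriv_nonneg
    (f := fun x => β ^ 3 * (tanh (β * (x - v)) - tanh (β * (x - v)) ^ 3 / 3))
    (f' := fun x => (β ^ 2 * sech (β * (x - v)) ^ 2) ^ 2) (fun x => ?_) (by fun_prop)
    (fun x => by positivity)
    (((tanh_scaled_atBot v hβ).sub (((tanh_scaled_atBot v hβ).pow 3).div_const 3)).const_mul _)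
    (((tanh_scaled_atTop v hβ).sub (((tanh_scaled_atTop v hβ).pow 3).div_const 3)).const_mul _)
  · refine ⟨h.1, h.2.trans ?_⟩
    ring
  · have hd := hasDerivAt_tanh_scaled (β := β) v x
    refine ((hd.fun_sub ((hd.fun_pow 3).div_const 3)).const_mul _).congr_deriv ?_
    have := sech_sq (β * (x - v))
    push_cast
    linear_combination (-β ^ 4 * sech (β * (x - v)) ^ 2) * this

lemma soliton_admissible (hβ : 0 < β) :
    ∃ g' : ℝ → ℝ, Admissible (fun x => √(β / 2) * sech (β * (x - v))) g' ∧
      ∫ x, g' x ^ 2 = β ^ 2 / 3 := by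
  have hc := continuous_sech
  have ht := continuous_tanh'
  have hsq : √(β / 2) ^ 2 = β / 2 := sq_sqrt (by positivity)
  have h1 := integral_deriv_nonneg (f := fun x => tanh (β * (x - v)) / 2)
    (f' := fun x => (√(β / 2) * sech (β * (x - v))) ^ 2) (fun x => by
      refine ((hasDerivAt_tanh_scaled v x).div_const 2).congr_deriv ?_
      rw [mul_pow, hsq]; ring) (by fun_prop) (fun x => by positivity)
    ((tanh_scaled_atBot v hβ).div_const 2) ((tanh_scaled_atTop v hβ).div_const 2)
  have h2 := integral_deriv_nonneg (f := fun x => β ^ 2 / 6 * tanh (β * (x - v)) ^ 3)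
    (f' := fun x => (√(β / 2) * (-(sech (β * (x - v)) * tanh (β * (x - v))) * β)) ^ 2) (fun x => by
      refine (((hasDerivAt_tanh_scaled v x).fun_pow 3).const_mul _).congr_deriv ?_
      rw [mul_pow, hsq]; push_cast; ring) (by fun_prop) (fun x => by positivity)
    (((tanh_scaled_atBot v hβ).pow 3).const_mul _) (((tanh_scaled_atTop v hβ).pow 3).const_mul _)
  refine ⟨_, ⟨fun x => ((hasDerivAt_sech _).comp x (hasDerivAt_scaled v x)).const_mul _,
    h1.1, h2.1, h1.2.trans (by norm_num)⟩, h2.2.trans (by ring)⟩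

/-- For `φ = β² sech² (β (x - v))` the optimal trial function is `√φ`, normalized. -/
lemma soliton_energy (hβ : 0 < β) :
    ∃ g' : ℝ → ℝ, Admissible (fun x => √(β / 2) * sech (β * (x - v))) g' ∧
      ∫ x, (β ^ 2 * sech (β * (x - v)) ^ 2 * (√(β / 2) * sech (β * (x - v))) ^ 2
        - 1 / 2 * g' x ^ 2) = β ^ 2 / 2 := by
  obtain ⟨g', H, hg'⟩ := soliton_admissible v hβ
  obtain ⟨hi, h4⟩ := integral_sech_four v hβ
  refine ⟨g', H, ?_⟩
  have hsq : √(β / 2) ^ 2 = β / 2 := sq_sqrt (by positivity)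
  have e1 : (fun x => β ^ 2 * sech (β * (x - v)) ^ 2 * (√(β / 2) * sech (β * (x - v))) ^ 2) =
      fun x => 1 / (2 * β) * (β ^ 2 * sech (β * (x - v)) ^ 2) ^ 2 := by
    ext x
    rw [mul_pow, hsq]
    field_simp
  have e2 : Integrable
      (fun x => β ^ 2 * sech (β * (x - v)) ^ 2 * (√(β / 2) * sech (β * (x - v))) ^ 2) := by
    rw [e1]; exact hi.const_mul _
  rw [integral_sub e2 (H.sq'.const_mul _), e1, integral_const_mul, integral_const_mul, h4, hg']
  field_simp
  ring

end Soliton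

/-! ### The upper bound and the case of equality -/

lemma energy_le {φ : ℝ → ℝ} (hφ : InL2R φ) {s : ℝ} (hs : 0 ≤ s)
    (hs3 : s ^ 3 = 6 * ∫ x, φ x ^ 2) {g g' : ℝ → ℝ} (H : Admissible g g') :
    ∫ x, (φ x * g x ^ 2 - (1 / 2) * g' x ^ 2) ≤ s ^ 2 / 8 := by
  by_cases hi : Integrable (fun x => φ x * g x ^ 2 - (1 / 2) * g' x ^ 2)
  swap
  -- the integral of a nonintegrable energy density is `0` by convention
  · rw [integral_undef hi]; positivity
  rcases hs.eq_or_lt with h0 | h0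
  · subst h0
    have h1 : ∫ x, φ x ^ 2 = 0 := by linarith
    rw [integral_eq_zero_iff_of_nonneg (fun x => sq_nonneg _) hφ] at h1
    have h2 : ∫ x, (φ x * g x ^ 2 - (1 / 2) * g' x ^ 2) ≤ 0 := by
      refine integral_nonpos_of_ae ?_
      filter_upwards [h1] with x hx
      have h3 : φ x = 0 := by simpa using hx
      simp only [h3, Pi.zero_apply]
      nlinarith [sq_nonneg (g' x)]
    linarith
  · obtain ⟨T, hT, hT0, hT1, hbot, htop⟩ :=
      exists_cumulative (H.cont.pow 2) (fun x => sq_nonneg _) H.sq H.mass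
    have h := (H.energy_identity hT hT0 hT1 hbot htop h0 hφ hs3 hi).2
    have h1 : 0 ≤ ∫ x, (g' x + s * g x * (T x - 1 / 2)) ^ 2 := integral_nonneg fun x => sq_nonneg _
    have h2 : 0 ≤ ∫ x, (g x ^ 2 - φ x / s) ^ 2 := integral_nonneg fun x => sq_nonneg _
    nlinarith [mul_nonneg h0.le h2]

lemma Ffun_le {φ : ℝ → ℝ} {b : ℝ} (hb : 0 ≤ b) (h : ∀ g g', Admissible g g' →
    ∫ x, (φ x * g x ^ 2 - (1 / 2) * g' x ^ 2) ≤ b) : Ffun φ ≤ b := by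
  refine Real.sSup_le ?_ hb
  rintro c ⟨g, g', h1, h2, h3, h4, rfl⟩
  exact h g g' ⟨h1, h2, h3, h4⟩

lemma le_Ffun {φ : ℝ → ℝ} {b : ℝ} (h : ∀ g g', Admissible g g' →
    ∫ x, (φ x * g x ^ 2 - (1 / 2) * g' x ^ 2) ≤ b) {g g' : ℝ → ℝ} (H : Admissible g g') :
    ∫ x, (φ x * g x ^ 2 - (1 / 2) * g' x ^ 2) ≤ Ffun φ := by
  refine le_csSup ⟨b, ?_⟩ ⟨g, g', H.1, H.2, H.3, H.4, rfl⟩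
  rintro c ⟨g, g', h1, h2, h3, h4, rfl⟩
  exact h g g' ⟨h1, h2, h3, h4⟩

/-- Trial functions whose energies approach `s² / 8` make both squares in
`Admissible.energy_identity` small, so their densities converge to `φ / s` in `L²` while almost
solving the logistic equation; no maximizer has to be constructed. -/
lemma optimizer_of_eq {φ : ℝ → ℝ} (hφ : InL2R φ) {s : ℝ} (hs : 0 < s)
    (hs3 : s ^ 3 = 6 * ∫ x, φ x ^ 2) (hF : Ffun φ = s ^ 2 / 8) :
    ∃ α : ℝ, 0 ≤ α ∧ ∃ v : ℝ, ∀ᵐ x, φ x = α ^ 2 * sech (α * (x - v)) ^ 2 := by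
  have hseq : ∀ n : ℕ, ∃ h T : ℝ → ℝ, Continuous h ∧ (∀ x, HasDerivAt T (h x) x) ∧
      (∀ x, 0 ≤ T x) ∧ (∀ x, T x ≤ 1) ∧
      (∀ x, |h x - s * (T x * (1 - T x))| ≤ 1 / ((n : ℝ) + 1)) ∧
      Integrable (fun x => (h x - φ x / s) ^ 2) ∧
      ∫ x, (h x - φ x / s) ^ 2 ≤ 1 / ((n : ℝ) + 1) := by
    intro n
    set η : ℝ := 1 / ((n : ℝ) + 1) with hη
    have hηp : 0 < η := by positivity
    obtain ⟨δ, hδ, hδ1, hδ2⟩ : ∃ δ : ℝ, 0 < δ ∧ δ ≤ η ^ 2 / 8 ∧ δ ≤ s * η / 2 :=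
      ⟨min (η ^ 2 / 8) (s * η / 2), by positivity, min_le_left _ _, min_le_right _ _⟩
    obtain ⟨g, g', H, hg⟩ : ∃ g g', Admissible g g' ∧
        max 0 (s ^ 2 / 8 - δ) < ∫ x, (φ x * g x ^ 2 - (1 / 2) * g' x ^ 2) := by
      by_contra! hcon
      have h1 := Ffun_le (le_max_left _ _) hcon
      rw [hF] at h1
      exact absurd h1 (not_le.2 (max_lt (by positivity) (by linarith)))
    have hg0 := (le_max_left _ _).trans_lt hg
    have hg1 := (le_max_right _ _).trans_lt hg
    -- a nonintegrable integrand would have integral `0`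
    have hi : Integrable (fun x => φ x * g x ^ 2 - (1 / 2) * g' x ^ 2) := by
      by_contra hi
      rw [integral_undef hi] at hg0
      exact lt_irrefl _ hg0
    obtain ⟨T, hT, hT0, hT1, hbot, htop⟩ :=
      exists_cumulative (H.cont.pow 2) (fun x => sq_nonneg _) H.sq H.mass
    obtain ⟨hint, h⟩ := H.energy_identity hT hT0 hT1 hbot htop hs hφ hs3 hi
    have h1 : 0 ≤ ∫ x, (g' x + s * g x * (T x - 1 / 2)) ^ 2 := integral_nonneg fun x => sq_nonneg _
    have h2 : 0 ≤ ∫ x, (g x ^ 2 - φ x / s) ^ 2 := integral_nonneg fun x => sq_nonneg _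
    have h3 := mul_nonneg hs.le h2
    refine ⟨fun x => g x ^ 2, T, H.cont.pow 2, hT, hT0, hT1, fun x => ?_, hint, ?_⟩
    · have := H.logistic_defect hT hT0 hT1 hbot (s := s) (half_pos hηp) (by nlinarith) x
      linarith
    · refine le_of_mul_le_mul_left (a := s) ?_ hs
      linarith
  choose h T hc hT hT0 hT1 hd hi hl using hseq
  obtain ⟨S, hS0, hS1, hS, hae⟩ := limit_logistic hs hc hT hT0 hT1 hd hi hl
  obtain ⟨α, hα, v, hv⟩ := logistic_sech hs hS0 hS1 hS
  refine ⟨α, hα, v, ?_⟩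
  filter_upwards [hae] with x hx
  rw [← hv x]
  rw [div_eq_iff hs.ne'] at hx
  rw [hx]; ring

lemma eq_of_optimizer {φ : ℝ → ℝ} (hφ : InL2R φ) {s : ℝ} (hs : 0 ≤ s)
    (hs3 : s ^ 3 = 6 * ∫ x, φ x ^ 2) {α v : ℝ} (hα : 0 ≤ α)
    (h : ∀ᵐ x, φ x = α ^ 2 * sech (α * (x - v)) ^ 2) : s ^ 2 / 8 ≤ Ffun φ := by
  have hle := fun g g' (H : Admissible g g') => energy_le hφ hs hs3 H
  rcases hα.eq_or_lt with h0 | h0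
  · subst h0
    have hφ0 : ∀ᵐ x, φ x = 0 := by simpa using h
    have h1 : ∫ x, φ x ^ 2 = 0 := by
      rw [integral_congr_ae (g := fun _ => (0 : ℝ)) (by filter_upwards [hφ0] with x hx; simp [hx])]
      simp
    have hs0 : s = 0 := by
      rw [h1, mul_zero] at hs3
      exact pow_eq_zero_iff (by norm_num) |>.1 hs3
    -- slowly varying trial functions have arbitrarily small kinetic energy
    have h2 : ∀ β : ℝ, 0 < β → -(β ^ 2 / 6) ≤ Ffun φ := by
      intro β hβ
      obtain ⟨g', H, hg'⟩ := soliton_admissible 0 hβ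
      refine le_trans (le_of_eq ?_) (le_Ffun hle H)
      rw [integral_congr_ae (g := fun x => -(1 / 2) * g' x ^ 2)
        (by filter_upwards [hφ0] with x hx; simp [hx]), integral_const_mul, hg']
      ring
    have h3 : Tendsto (fun β : ℝ => -(β ^ 2 / 6)) (𝓝[>] 0) (𝓝 (-((0 : ℝ) ^ 2 / 6))) :=
      (Continuous.tendsto (by fun_prop) 0).mono_left nhdsWithin_le_nhds
    have h4 := le_of_tendsto h3 (eventually_nhdsWithin_of_forall fun β hβ => h2 β hβ)
    rw [hs0]
    simpa using h4
  · have h1 : ∫ x, φ x ^ 2 = 4 / 3 * α ^ 3 := by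
      rw [← (integral_sech_four v h0).2]
      exact integral_congr_ae (by filter_upwards [h] with x hx; rw [hx])
    have hs2 : s = 2 * α := by
      rw [h1] at hs3
      exact (pow_left_inj₀ hs (by positivity) (by norm_num : (3 : ℕ) ≠ 0)).1 (by rw [hs3]; ring)
    obtain ⟨g', H, hg'⟩ := soliton_energy v h0
    refine le_trans (le_of_eq ?_) (le_Ffun hle H)
    rw [hs2, show (2 * α) ^ 2 / 8 = α ^ 2 / 2 by ring, ← hg']
    exact integral_congr_ae (by filter_upwards [h] with x hx; rw [hx])

/-- The scale `s` with `s³ = 6 I`, in terms of which the bound is `s² / 8`. -/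
lemma exists_scale {I : ℝ} (hI : 0 ≤ I) : ∃ s : ℝ, 0 ≤ s ∧ s ^ 3 = 6 * I ∧
    (1 / 2) * (3 / 4 : ℝ) ^ ((2 : ℝ) / 3) * I ^ ((2 : ℝ) / 3) = s ^ 2 / 8 := by
  have hp : ((6 * I) ^ ((1 : ℝ) / 3)) ^ 3 = 6 * I := by
    rw [← rpow_natCast, ← rpow_mul (by positivity)]
    norm_num
  refine ⟨(6 * I) ^ ((1 : ℝ) / 3), by positivity, hp, ?_⟩
  set s := (6 * I) ^ ((1 : ℝ) / 3) with hs
  have hs0 : 0 ≤ s := by positivity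
  have h1 : 3 / 4 * I = (s / 2) ^ (3 : ℝ) := by
    have : (s / 2) ^ (3 : ℝ) = (s / 2) ^ 3 := by exact_mod_cast rpow_natCast (s / 2) 3
    rw [this, div_pow, hp]; ring
  have h2 : (s / 2) ^ (2 : ℝ) = (s / 2) ^ 2 := by exact_mod_cast rpow_natCast (s / 2) 2
  rw [mul_assoc, ← mul_rpow (by norm_num) hI, h1, ← rpow_mul (by positivity)]
  norm_num only
  rw [h2]; ring

/-- `F(φ) ≤ ½ (3/4)^{2/3} ‖φ‖_{L²}^{4/3}`, with equality iff
`φ(x) = α² sech²(α(x−v))` a.e. for some `α ≥ 0`, `v ∈ ℝ`. -/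
theorem F_upper_bound_and_optimizers (φ : ℝ → ℝ) (hφ : InL2R φ) :
    Ffun φ ≤ (1 / 2) * (3 / 4 : ℝ) ^ ((2 : ℝ) / 3) *
        (∫ x : ℝ, φ x ^ 2) ^ ((2 : ℝ) / 3) ∧
    (Ffun φ = (1 / 2) * (3 / 4 : ℝ) ^ ((2 : ℝ) / 3) *
        (∫ x : ℝ, φ x ^ 2) ^ ((2 : ℝ) / 3) ↔
      ∃ α : ℝ, 0 ≤ α ∧ ∃ v : ℝ,
        ∀ᵐ x : ℝ ∂MeasureTheory.volume, φ x = α ^ 2 * sech (α * (x - v)) ^ 2) := by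
  obtain ⟨s, hs, hs3, hR⟩ := exists_scale (I := ∫ x, φ x ^ 2) (integral_nonneg fun x => sq_nonneg _)
  rw [hR]
  have hle : Ffun φ ≤ s ^ 2 / 8 :=
    Ffun_le (by positivity) fun g g' H => energy_le hφ hs hs3 H
  refine ⟨hle, fun hF => ?_, fun ⟨α, hα, v, hv⟩ => hle.antisymm (eq_of_optimizer hφ hs hs3 hα hv)⟩
  rcases hs.eq_or_lt with h0 | h0
  · refine ⟨0, le_rfl, 0, ?_⟩
    have h1 : ∫ x, φ x ^ 2 = 0 := by rw [← h0] at hs3; linarith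
    rw [integral_eq_zero_iff_of_nonneg (fun x => sq_nonneg _) hφ] at h1
    filter_upwards [h1] with x hx
    simpa using hx
  · exact optimizer_of_eq hφ h0 hs3 hF
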